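/- (Realisation Theorem) Let L be one of IK, IKt, IK4, IS4 and JL the corresponding justification logic JIK, JIKt, JIK4, JIS4. If A is a theorem of L, then there exists a realisation r (a map from intuitionistic modal formulas to justification formulas with (A^r)° = A, where ° is the forgetful projection) such that A^r is a theorem of JL. -/

import Mathlib

namespace JIKPaper

-- Proof terms and satisfiers for intuitionistic justification logic.
mutual
inductive PrfTm : Type
  | pvar : Nat → PrfTm
  | pconst : Nat → PrfTm
  | sum : PrfTm → PrfTm → PrfTm
  | app : PrfTm → PrfTm → PrfTm
  | upd : SatTm → PrfTm → PrfTm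
  | bang : PrfTm → PrfTm
inductive SatTm : Type
  | svar : Nat → SatTm
  | uni : SatTm → SatTm → SatTm
  | prop : PrfTm → SatTm → SatTm
end

/-- Justification formulas. -/
inductive JForm : Type
  | bot : JForm
  | atom : Nat → JForm
  | and : JForm → JForm → JForm
  | or : JForm → JForm → JForm
  | impl : JForm → JForm → JForm
  | jst : PrfTm → JForm → JForm
  | sat : SatTm → JForm → JForm

/-- Intuitionistic modal formulas. -/
inductive MForm : Type
  | bot : MForm
  | atom : Nat → MForm
  | and : MForm → MForm → MForm
  | or : MForm → MForm → MForm
  | impl : MForm → MForm → MForm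
  | box : MForm → MForm
  | dia : MForm → MForm

/-- Axiom instances of the justification logics JIK (false,false), JIKt (true,false),
JIK4 (false,true), JIS4 (true,true): intuitionistic propositional axioms, jk1–jk5,
sum axioms, and optionally the jt and j4 axioms. -/
inductive JAx : Bool → Bool → JForm → Prop
  | ax1 {hT h4 : Bool} {A B : JForm} : JAx hT h4 (A.impl (B.impl A))
  | ax2 {hT h4 : Bool} {A B C : JForm} :
      JAx hT h4 ((A.impl (B.impl C)).impl ((A.impl B).impl (A.impl C)))
  | andI {hT h4 : Bool} {A B : JForm} : JAx hT h4 (A.impl (B.impl (A.and B)))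
  | andE1 {hT h4 : Bool} {A B : JForm} : JAx hT h4 ((A.and B).impl A)
  | andE2 {hT h4 : Bool} {A B : JForm} : JAx hT h4 ((A.and B).impl B)
  | orI1 {hT h4 : Bool} {A B : JForm} : JAx hT h4 (A.impl (A.or B))
  | orI2 {hT h4 : Bool} {A B : JForm} : JAx hT h4 (B.impl (A.or B))
  | orE {hT h4 : Bool} {A B C : JForm} :
      JAx hT h4 ((A.impl C).impl ((B.impl C).impl ((A.or B).impl C)))
  | exf {hT h4 : Bool} {A : JForm} : JAx hT h4 (JForm.bot.impl A)
  | jk1 {hT h4 : Bool} {s t : PrfTm} {A B : JForm} :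
      JAx hT h4 ((JForm.jst s (A.impl B)).impl
        ((JForm.jst t A).impl (JForm.jst (PrfTm.app s t) B)))
  | jk2 {hT h4 : Bool} {s : PrfTm} {μ : SatTm} {A B : JForm} :
      JAx hT h4 ((JForm.jst s (A.impl B)).impl
        ((JForm.sat μ A).impl (JForm.sat (SatTm.prop s μ) B)))
  | jk3 {hT h4 : Bool} {μ : SatTm} {A B : JForm} :
      JAx hT h4 ((JForm.sat μ (A.or B)).impl ((JForm.sat μ A).or (JForm.sat μ B)))
  | jk4 {hT h4 : Bool} {μ : SatTm} {t : PrfTm} {A B : JForm} :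
      JAx hT h4 (((JForm.sat μ A).impl (JForm.jst t B)).impl
        (JForm.jst (PrfTm.upd μ t) (A.impl B)))
  | jk5 {hT h4 : Bool} {μ : SatTm} :
      JAx hT h4 ((JForm.sat μ JForm.bot).impl JForm.bot)
  | sum1 {hT h4 : Bool} {s t : PrfTm} {A : JForm} :
      JAx hT h4 ((JForm.jst s A).impl (JForm.jst (PrfTm.sum s t) A))
  | sum2 {hT h4 : Bool} {s t : PrfTm} {A : JForm} :
      JAx hT h4 ((JForm.jst t A).impl (JForm.jst (PrfTm.sum s t) A))
  | uni1 {hT h4 : Bool} {μ ν : SatTm} {A : JForm} :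
      JAx hT h4 ((JForm.sat μ A).impl (JForm.sat (SatTm.uni μ ν) A))
  | uni2 {hT h4 : Bool} {μ ν : SatTm} {A : JForm} :
      JAx hT h4 ((JForm.sat ν A).impl (JForm.sat (SatTm.uni μ ν) A))
  | jtBox {h4 : Bool} {t : PrfTm} {A : JForm} : JAx true h4 ((JForm.jst t A).impl A)
  | jtDia {h4 : Bool} {μ : SatTm} {A : JForm} : JAx true h4 (A.impl (JForm.sat μ A))
  | j4Box {hT : Bool} {t : PrfTm} {A : JForm} :
      JAx hT true ((JForm.jst t A).impl (JForm.jst (PrfTm.bang t) (JForm.jst t A)))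
  | j4Dia {hT : Bool} {μ ν : SatTm} {A : JForm} :
      JAx hT true ((JForm.sat μ (JForm.sat ν A)).impl (JForm.sat ν A))

/-- `cₙ:⋯:c₁:A` for a list of constants. -/
def canChain (cs : List Nat) (A : JForm) : JForm :=
  cs.foldr (fun c B => JForm.jst (PrfTm.pconst c) B) A

/-- Theorems of the justification logic: closure of the axioms under modus ponens and
the constant axiom necessitation rule (with the empty chain giving the axioms). -/
inductive JThm (hT h4 : Bool) : JForm → Prop
  | can {A : JForm} (cs : List Nat) : JAx hT h4 A → JThm hT h4 (canChain cs A)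
  | mp {A B : JForm} : JThm hT h4 (A.impl B) → JThm hT h4 A → JThm hT h4 B

/-- Axiom instances of IK (false,false), IKt (true,false), IK4 (false,true), IS4 (true,true). -/
inductive MAx : Bool → Bool → MForm → Prop
  | ax1 {hT h4 : Bool} {A B : MForm} : MAx hT h4 (A.impl (B.impl A))
  | ax2 {hT h4 : Bool} {A B C : MForm} :
      MAx hT h4 ((A.impl (B.impl C)).impl ((A.impl B).impl (A.impl C)))
  | andI {hT h4 : Bool} {A B : MForm} : MAx hT h4 (A.impl (B.impl (A.and B)))
  | andE1 {hT h4 : Bool} {A B : MForm} : MAx hT h4 ((A.and B).impl A)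
  | andE2 {hT h4 : Bool} {A B : MForm} : MAx hT h4 ((A.and B).impl B)
  | orI1 {hT h4 : Bool} {A B : MForm} : MAx hT h4 (A.impl (A.or B))
  | orI2 {hT h4 : Bool} {A B : MForm} : MAx hT h4 (B.impl (A.or B))
  | orE {hT h4 : Bool} {A B C : MForm} :
      MAx hT h4 ((A.impl C).impl ((B.impl C).impl ((A.or B).impl C)))
  | exf {hT h4 : Bool} {A : MForm} : MAx hT h4 (MForm.bot.impl A)
  | k1 {hT h4 : Bool} {A B : MForm} :
      MAx hT h4 ((A.impl B).box.impl (A.box.impl B.box))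
  | k2 {hT h4 : Bool} {A B : MForm} :
      MAx hT h4 ((A.impl B).box.impl (A.dia.impl B.dia))
  | k3 {hT h4 : Bool} {A B : MForm} :
      MAx hT h4 ((A.or B).dia.impl (A.dia.or B.dia))
  | k4 {hT h4 : Bool} {A B : MForm} :
      MAx hT h4 ((A.dia.impl B.box).impl (A.impl B).box)
  | k5 {hT h4 : Bool} : MAx hT h4 (MForm.bot.dia.impl MForm.bot)
  | tBox {h4 : Bool} {A : MForm} : MAx true h4 (A.box.impl A)
  | tDia {h4 : Bool} {A : MForm} : MAx true h4 (A.impl A.dia)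
  | fourBox {hT : Bool} {A : MForm} : MAx hT true (A.box.impl A.box.box)
  | fourDia {hT : Bool} {A : MForm} : MAx hT true (A.dia.dia.impl A.dia)

/-- Theorems of the intuitionistic modal logic: modus ponens and necessitation. -/
inductive MThm (hT h4 : Bool) : MForm → Prop
  | ax {A : MForm} : MAx hT h4 A → MThm hT h4 A
  | mp {A B : MForm} : MThm hT h4 (A.impl B) → MThm hT h4 A → MThm hT h4 B
  | nec {A : MForm} : MThm hT h4 A → MThm hT h4 A.box

/-- The forgetful projection from justification formulas to modal formulas. -/
def forget : JForm → MForm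
  | .bot => .bot
  | .atom n => .atom n
  | .and A B => .and (forget A) (forget B)
  | .or A B => .or (forget A) (forget B)
  | .impl A B => .impl (forget A) (forget B)
  | .jst _ A => .box (forget A)
  | .sat _ A => .dia (forget A)


/-! ## Uniform provability of families of justification formulas -/

/-- Uniform theoremhood of a family: one proof skeleton serves all members. -/
inductive UThm (hT h4 : Bool) {ι : Type} : (ι → JForm) → Prop
  | can {F : ι → JForm} (cs : List Nat) (h : ∀ i, JAx hT h4 (F i)) :
      UThm hT h4 (fun i => canChain cs (F i))
  | mp {F G : ι → JForm} : UThm hT h4 (fun i => (F i).impl (G i)) → UThm hT h4 F →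
      UThm hT h4 G

section Uniform

variable {hT h4 : Bool}
local notation "Th" => UThm hT h4

theorem UThm.ax {ι : Type} {F : ι → JForm} (h : ∀ i, JAx hT h4 (F i)) : Th F :=
  UThm.can (F := F) [] h

theorem UThm.toJ {ι : Type} {F : ι → JForm} (h : Th F) (i : ι) : JThm hT h4 (F i) := by
  induction h with
  | can cs h => exact JThm.can cs (h i)
  | mp _ _ h1 h2 => exact JThm.mp h1 h2

theorem UThm.ofJ {A : JForm} (h : JThm hT h4 A) : Th (fun _ : Unit => A) := by
  induction h with
  | can cs h => exact UThm.can (F := fun _ : Unit => _) cs (fun _ => h)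
  | mp _ _ h1 h2 => exact UThm.mp h1 h2

theorem UThm.reindex {ι κ : Type} {F : ι → JForm} (h : Th F) (f : κ → ι) :
    Th (fun k => F (f k)) := by
  induction h with
  | @can F cs h => exact UThm.can (F := fun k => F (f k)) cs (fun k => h (f k))
  | mp _ _ h1 h2 => exact UThm.mp h1 h2

theorem UThm.lift {ι : Type} {F : ι → JForm} (h : Th F) :
    ∃ c : PrfTm, Th (fun i => JForm.jst c (F i)) := by
  induction h with
  | @can F cs h => exact ⟨PrfTm.pconst 0, UThm.can (F := F) (0 :: cs) h⟩
  | @mp F G _ _ h1 h2 =>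
    obtain ⟨c, hc⟩ := h1
    obtain ⟨d, hd⟩ := h2
    exact ⟨PrfTm.app c d, UThm.mp (UThm.mp (UThm.ax fun i => JAx.jk1) hc) hd⟩

/-- Uniform entailment between families. -/
def Imp (hT h4 : Bool) {ι : Type} (F G : ι → JForm) : Prop :=
  UThm hT h4 (fun i => (F i).impl (G i))

local notation "I" => Imp hT h4

variable {ι : Type} {F G H K : ι → JForm}

theorem UThm.const (h : Th G) : I F G :=
  UThm.mp (F := G) (UThm.ax fun _ => JAx.ax1) h

theorem Imp.mp (h : I F G) (h' : Th F) : Th G := UThm.mp h h'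

theorem Imp.s (h1 : Th fun i => (F i).impl ((G i).impl (H i))) (h2 : I F G) : I F H :=
  UThm.mp (UThm.mp (UThm.ax fun _ => JAx.ax2) h1) h2

theorem Imp.refl : I F F :=
  Imp.s (G := fun i => (F i).impl (F i)) (UThm.ax fun _ => JAx.ax1) (UThm.ax fun _ => JAx.ax1)

theorem Imp.trans (h1 : I F G) (h2 : I G H) : I F H :=
  Imp.s (G := G) (UThm.const h2) h1

theorem Imp.ax (h : ∀ i, JAx hT h4 ((F i).impl (G i))) : I F G := UThm.ax h

theorem Imp.andI (h1 : I F G) (h2 : I F H) : I F (fun i => (G i).and (H i)) :=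
  Imp.s (Imp.trans h1 (Imp.ax fun _ => JAx.andI)) h2

theorem Imp.fst : I (fun i => (F i).and (G i)) F := Imp.ax fun _ => JAx.andE1
theorem Imp.snd : I (fun i => (F i).and (G i)) G := Imp.ax fun _ => JAx.andE2
theorem Imp.inl : I F (fun i => (F i).or (G i)) := Imp.ax fun _ => JAx.orI1
theorem Imp.inr : I G (fun i => (F i).or (G i)) := Imp.ax fun _ => JAx.orI2

theorem Imp.orE (h1 : I F H) (h2 : I G H) : I (fun i => (F i).or (G i)) H :=
  UThm.mp (UThm.mp (UThm.ax fun _ => JAx.orE) h1) h2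

theorem Imp.curry (h : I (fun i => (F i).and (G i)) H) :
    I F (fun i => (G i).impl (H i)) := by
  have h1 : I F (fun i => (G i).impl ((F i).and (G i))) := Imp.ax fun _ => JAx.andI
  have h2 : I (fun i => (G i).impl ((F i).and (G i))) (fun i => (G i).impl (H i)) :=
    UThm.mp (UThm.ax fun _ => JAx.ax2) (UThm.const (F := G) h)
  exact h1.trans h2

theorem Imp.app (h1 : I F (fun i => (G i).impl (H i))) (h2 : I F G) : I F H := Imp.s h1 h2

theorem Imp.uncurry (h : I F (fun i => (G i).impl (H i))) :
    I (fun i => (F i).and (G i)) H := Imp.app (Imp.fst.trans h) Imp.snd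

theorem Imp.and_map (h1 : I F H) (h2 : I G K) :
    I (fun i => (F i).and (G i)) (fun i => (H i).and (K i)) :=
  Imp.andI (Imp.fst.trans h1) (Imp.snd.trans h2)

theorem Imp.or_map (h1 : I F H) (h2 : I G K) :
    I (fun i => (F i).or (G i)) (fun i => (H i).or (K i)) :=
  Imp.orE (h1.trans Imp.inl) (h2.trans Imp.inr)

theorem Imp.impl_map (h1 : I H F) (h2 : I G K) :
    I (fun i => (F i).impl (G i)) (fun i => (H i).impl (K i)) :=
  Imp.curry (Imp.trans (Imp.app Imp.fst (Imp.snd.trans h1)) h2)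

theorem Imp.reindex {κ : Type} (h : I F G) (f : κ → ι) :
    I (fun k => F (f k)) (fun k => G (f k)) := UThm.reindex h f

theorem Imp.box (h : I F G) : ∃ c : PrfTm, ∀ {κ : Type} (f : κ → ι) (t : κ → PrfTm),
    I (fun k => .jst (t k) (F (f k))) (fun k => .jst (.app c (t k)) (G (f k))) := by
  obtain ⟨c, hc⟩ := UThm.lift h
  exact ⟨c, fun f t => UThm.mp (UThm.ax fun _ => JAx.jk1) (UThm.reindex hc f)⟩

theorem Imp.dia (h : I F G) : ∃ c : PrfTm, ∀ {κ : Type} (f : κ → ι) (t : κ → SatTm),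
    I (fun k => .sat (t k) (F (f k))) (fun k => .sat (.prop c (t k)) (G (f k))) := by
  obtain ⟨c, hc⟩ := UThm.lift h
  exact ⟨c, fun f t => UThm.mp (UThm.ax fun _ => JAx.jk2) (UThm.reindex hc f)⟩

end Uniform

/-! ## Annotations and realisations -/

/-- Annotations of all modalities of a formula by terms. -/
def Ann : MForm → Type
  | .bot => Unit
  | .atom _ => Unit
  | .and A B => Ann A × Ann B
  | .or A B => Ann A × Ann B
  | .impl A B => Ann A × Ann B
  | .box A => PrfTm × Ann A
  | .dia A => SatTm × Ann A

def Ann.dflt : (X : MForm) → Ann X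
  | .bot => ()
  | .atom _ => ()
  | .and A B => (dflt A, dflt B)
  | .or A B => (dflt A, dflt B)
  | .impl A B => (dflt A, dflt B)
  | .box A => (.pconst 0, dflt A)
  | .dia A => (.svar 0, dflt A)

/-- Realisation of `X` with polarity `b`; modalities in negative position are annotated from the
first annotation (universal), those in positive position from the second (existential). -/
def real : (b : Bool) → (X : MForm) → Ann X → Ann X → JForm
  | _, .bot, _, _ => .bot
  | _, .atom n, _, _ => .atom n
  | b, .and A B, u, e => .and (real b A u.1 e.1) (real b B u.2 e.2)
  | b, .or A B, u, e => .or (real b A u.1 e.1) (real b B u.2 e.2)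
  | true, .impl A B, u, e => .impl (real false A u.1 e.1) (real true B u.2 e.2)
  | false, .impl A B, u, e => .impl (real true A u.1 e.1) (real false B u.2 e.2)
  | true, .box A, u, e => .jst e.1 (real true A u.2 e.2)
  | false, .box A, u, e => .jst u.1 (real false A u.2 e.2)
  | true, .dia A, u, e => .sat e.1 (real true A u.2 e.2)
  | false, .dia A, u, e => .sat u.1 (real false A u.2 e.2)

theorem forget_real (b : Bool) (X : MForm) (u e : Ann X) : forget (real b X u e) = X := by
  induction X generalizing b with
  | bot => cases b <;> rfl
  | atom => cases b <;> rfl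
  | and A B ha hb => cases b <;> simp [real, forget, ha, hb]
  | or A B ha hb => cases b <;> simp [real, forget, ha, hb]
  | impl A B ha hb => cases b <;> simp [real, forget, ha, hb]
  | box A ha => cases b <;> simp [real, forget, ha]
  | dia A ha => cases b <;> simp [real, forget, ha]

/-! ## Entailment orders between modal formulas in negative and positive position -/

/-- `X` entails `Y`, both in negative position. -/
def LL (hT h4 : Bool) (X Y : MForm) : Prop :=
  ∃ (f : Ann X → Ann Y) (g : Ann X → Ann Y → Ann X),
    Imp hT h4 (fun p : Ann X × Ann Y => real false X p.1 (g p.1 p.2))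
      (fun p => real false Y (f p.1) p.2)

/-- `X` entails `Y`, both in positive position. -/
def RR (hT h4 : Bool) (X Y : MForm) : Prop :=
  ∃ (f : Ann Y → Ann X) (g : Ann Y → Ann X → Ann Y),
    Imp hT h4 (fun p : Ann Y × Ann X => real true X (f p.1) p.2)
      (fun p => real true Y p.1 (g p.1 p.2))

/-- `Q` and `P` entail `S`, all in positive position, `Q` being consulted first. -/
def RR2 (hT h4 : Bool) (Q P S : MForm) : Prop :=
  ∃ (f₁ : Ann S → Ann Q) (f₂ : Ann S → Ann Q → Ann P) (g : Ann S → Ann Q → Ann P → Ann S),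
    Imp hT h4 (fun p : Ann S × Ann Q × Ann P => .and (real true Q (f₁ p.1) p.2.1)
      (real true P (f₂ p.1 p.2.1) p.2.2))
      (fun p => real true S p.1 (g p.1 p.2.1 p.2.2))

/-- Positive `Q` and negative `E` entail negative `D`. -/
def MM (hT h4 : Bool) (Q E D : MForm) : Prop :=
  ∃ (f₁ : Ann E → Ann Q) (f₂ : Ann E → Ann Q → Ann D) (g : Ann E → Ann Q → Ann D → Ann E),
    Imp hT h4 (fun p : Ann E × Ann Q × Ann D => .and (real true Q (f₁ p.1) p.2.1)
      (real false E p.1 (g p.1 p.2.1 p.2.2)))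
      (fun p => real false D (f₂ p.1 p.2.1) p.2.2)

section Orders

variable {hT h4 : Bool}
local notation "L" => LL hT h4
local notation "R" => RR hT h4
local notation "R2" => RR2 hT h4
local notation "M" => MM hT h4

variable {X Y Z X' Y' P Q S N C D E : MForm}

theorem LL.refl : L X X := ⟨fun u => u, fun _ e => e, Imp.refl⟩
theorem RR.refl : R X X := ⟨fun u => u, fun _ e => e, Imp.refl⟩

theorem LL.trans (h1 : L X Y) (h2 : L Y Z) : L X Z := by
  obtain ⟨f1, g1, h1⟩ := h1
  obtain ⟨f2, g2, h2⟩ := h2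
  exact ⟨fun u => f2 (f1 u), fun u e => g1 u (g2 (f1 u) e),
    (h1.reindex fun p : Ann X × Ann Z => (p.1, g2 (f1 p.1) p.2)).trans
      (h2.reindex fun p : Ann X × Ann Z => (f1 p.1, p.2))⟩

theorem RR.trans (h1 : R X Y) (h2 : R Y Z) : R X Z := by
  obtain ⟨f1, g1, h1⟩ := h1
  obtain ⟨f2, g2, h2⟩ := h2
  exact ⟨fun u => f1 (f2 u), fun u e => g2 u (g1 (f2 u) e),
    (h1.reindex fun p : Ann Z × Ann X => (f2 p.1, p.2)).trans
      (h2.reindex fun p : Ann Z × Ann X => (p.1, g1 (f2 p.1) p.2))⟩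

/-! ### Congruence -/

theorem LL.and_map (h1 : L X X') (h2 : L Y Y') : L (X.and Y) (X'.and Y') := by
  obtain ⟨f1, g1, h1⟩ := h1
  obtain ⟨f2, g2, h2⟩ := h2
  exact ⟨fun u => (f1 u.1, f2 u.2), fun u e => (g1 u.1 e.1, g2 u.2 e.2),
    Imp.and_map (h1.reindex fun p : Ann (X.and Y) × Ann (X'.and Y') => (p.1.1, p.2.1))
      (h2.reindex fun p : Ann (X.and Y) × Ann (X'.and Y') => (p.1.2, p.2.2))⟩

theorem LL.or_map (h1 : L X X') (h2 : L Y Y') : L (X.or Y) (X'.or Y') := by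
  obtain ⟨f1, g1, h1⟩ := h1
  obtain ⟨f2, g2, h2⟩ := h2
  exact ⟨fun u => (f1 u.1, f2 u.2), fun u e => (g1 u.1 e.1, g2 u.2 e.2),
    Imp.or_map (h1.reindex fun p : Ann (X.or Y) × Ann (X'.or Y') => (p.1.1, p.2.1))
      (h2.reindex fun p : Ann (X.or Y) × Ann (X'.or Y') => (p.1.2, p.2.2))⟩

theorem RR.and_map (h1 : R X X') (h2 : R Y Y') : R (X.and Y) (X'.and Y') := by
  obtain ⟨f1, g1, h1⟩ := h1
  obtain ⟨f2, g2, h2⟩ := h2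
  exact ⟨fun u => (f1 u.1, f2 u.2), fun u e => (g1 u.1 e.1, g2 u.2 e.2),
    Imp.and_map (h1.reindex fun p : Ann (X'.and Y') × Ann (X.and Y) => (p.1.1, p.2.1))
      (h2.reindex fun p : Ann (X'.and Y') × Ann (X.and Y) => (p.1.2, p.2.2))⟩

theorem RR.or_map (h1 : R X X') (h2 : R Y Y') : R (X.or Y) (X'.or Y') := by
  obtain ⟨f1, g1, h1⟩ := h1
  obtain ⟨f2, g2, h2⟩ := h2
  exact ⟨fun u => (f1 u.1, f2 u.2), fun u e => (g1 u.1 e.1, g2 u.2 e.2),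
    Imp.or_map (h1.reindex fun p : Ann (X'.or Y') × Ann (X.or Y) => (p.1.1, p.2.1))
      (h2.reindex fun p : Ann (X'.or Y') × Ann (X.or Y) => (p.1.2, p.2.2))⟩

theorem LL.impl_map (h1 : R X' X) (h2 : L Y Y') : L (X.impl Y) (X'.impl Y') := by
  obtain ⟨f1, g1, h1⟩ := h1
  obtain ⟨f2, g2, h2⟩ := h2
  exact ⟨fun u => (f1 u.1, f2 u.2), fun u e => (g1 u.1 e.1, g2 u.2 e.2),
    Imp.impl_map (h1.reindex fun p : Ann (X.impl Y) × Ann (X'.impl Y') => (p.1.1, p.2.1))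
      (h2.reindex fun p : Ann (X.impl Y) × Ann (X'.impl Y') => (p.1.2, p.2.2))⟩

theorem RR.impl_map (h1 : L X' X) (h2 : R Y Y') : R (X.impl Y) (X'.impl Y') := by
  obtain ⟨f1, g1, h1⟩ := h1
  obtain ⟨f2, g2, h2⟩ := h2
  exact ⟨fun u => (f1 u.1, f2 u.2), fun u e => (g1 u.1 e.1, g2 u.2 e.2),
    Imp.impl_map (h1.reindex fun p : Ann (X'.impl Y') × Ann (X.impl Y) => (p.1.1, p.2.1))
      (h2.reindex fun p : Ann (X'.impl Y') × Ann (X.impl Y) => (p.1.2, p.2.2))⟩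

theorem LL.box_map (h : L X Y) : L X.box Y.box := by
  obtain ⟨f, g, h⟩ := h
  obtain ⟨c, hc⟩ := h.box
  exact ⟨fun u => (.app c u.1, f u.2), fun u e => (e.1, g u.2 e.2),
    hc (fun p : Ann X.box × Ann Y.box => (p.1.2, p.2.2)) (fun p => p.1.1)⟩

theorem LL.dia_map (h : L X Y) : L X.dia Y.dia := by
  obtain ⟨f, g, h⟩ := h
  obtain ⟨c, hc⟩ := h.dia
  exact ⟨fun u => (.prop c u.1, f u.2), fun u e => (e.1, g u.2 e.2),
    hc (fun p : Ann X.dia × Ann Y.dia => (p.1.2, p.2.2)) (fun p => p.1.1)⟩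

theorem RR.box_map (h : R X Y) : R X.box Y.box := by
  obtain ⟨f, g, h⟩ := h
  obtain ⟨c, hc⟩ := h.box
  exact ⟨fun u => (u.1, f u.2), fun u e => (.app c e.1, g u.2 e.2),
    hc (fun p : Ann Y.box × Ann X.box => (p.1.2, p.2.2)) (fun p => p.2.1)⟩

theorem RR.dia_map (h : R X Y) : R X.dia Y.dia := by
  obtain ⟨f, g, h⟩ := h
  obtain ⟨c, hc⟩ := h.dia
  exact ⟨fun u => (u.1, f u.2), fun u e => (.prop c e.1, g u.2 e.2),
    hc (fun p : Ann Y.dia × Ann X.dia => (p.1.2, p.2.2)) (fun p => p.2.1)⟩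

/-! ### Linear propositional facts -/

theorem LL.fst : L (X.and Y) X :=
  ⟨fun u => u.1, fun u e => (e, u.2), Imp.fst⟩
theorem LL.snd : L (X.and Y) Y :=
  ⟨fun u => u.2, fun u e => (u.1, e), Imp.snd⟩

theorem LL.dup_and : L ((X.and X).and (Y.and Y)) ((X.and Y).and (X.and Y)) :=
  ⟨fun u => ((u.1.1, u.2.1), (u.1.2, u.2.2)), fun _ e => ((e.1.1, e.2.1), (e.1.2, e.2.2)),
    Imp.andI (Imp.and_map Imp.fst Imp.fst) (Imp.and_map Imp.snd Imp.snd)⟩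

theorem RR.dup_and : R ((X.and Y).or (X.and Y)) ((X.or X).and (Y.or Y)) :=
  ⟨fun u => ((u.1.1, u.2.1), (u.1.2, u.2.2)), fun _ e => ((e.1.1, e.2.1), (e.1.2, e.2.2)),
    Imp.orE (Imp.and_map Imp.inl Imp.inl) (Imp.and_map Imp.inr Imp.inr)⟩

theorem LL.dup_or : L ((X.and X).or (Y.and Y)) ((X.or Y).and (X.or Y)) :=
  ⟨fun u => ((u.1.1, u.2.1), (u.1.2, u.2.2)), fun _ e => ((e.1.1, e.2.1), (e.1.2, e.2.2)),
    Imp.andI (Imp.or_map Imp.fst Imp.fst) (Imp.or_map Imp.snd Imp.snd)⟩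

theorem RR.dup_or : R ((X.or Y).or (X.or Y)) ((X.or X).or (Y.or Y)) :=
  ⟨fun u => ((u.1.1, u.2.1), (u.1.2, u.2.2)), fun _ e => ((e.1.1, e.2.1), (e.1.2, e.2.2)),
    Imp.orE (Imp.or_map Imp.inl Imp.inl) (Imp.or_map Imp.inr Imp.inr)⟩

theorem LL.dup_impl : L ((X.or X).impl (Y.and Y)) ((X.impl Y).and (X.impl Y)) :=
  ⟨fun u => ((u.1.1, u.2.1), (u.1.2, u.2.2)), fun _ e => ((e.1.1, e.2.1), (e.1.2, e.2.2)),
    Imp.andI (Imp.impl_map Imp.inl Imp.fst) (Imp.impl_map Imp.inr Imp.snd)⟩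

theorem RR.dup_impl : R ((X.impl Y).or (X.impl Y)) ((X.and X).impl (Y.or Y)) :=
  ⟨fun u => ((u.1.1, u.2.1), (u.1.2, u.2.2)), fun _ e => ((e.1.1, e.2.1), (e.1.2, e.2.2)),
    Imp.orE (Imp.impl_map Imp.fst Imp.inl) (Imp.impl_map Imp.snd Imp.inr)⟩

theorem LL.dup_box : L (X.and X).box (X.box.and X.box) := by
  obtain ⟨c, hc⟩ := (Imp.fst (hT := hT) (h4 := h4)
    (F := fun p : Ann (X.and X) × Ann (X.and X) => real false X p.1.1 p.2.1)
    (G := fun p : Ann (X.and X) × Ann (X.and X) => real false X p.1.2 p.2.2)).box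
  obtain ⟨d, hd⟩ := (Imp.snd (hT := hT) (h4 := h4)
    (F := fun p : Ann (X.and X) × Ann (X.and X) => real false X p.1.1 p.2.1)
    (G := fun p : Ann (X.and X) × Ann (X.and X) => real false X p.1.2 p.2.2)).box
  exact ⟨fun u => ((.app c u.1, u.2.1), (.app d u.1, u.2.2)),
    fun u e => (u.1, (e.1.2, e.2.2)),
    Imp.andI
      (hc (fun p : Ann (X.and X).box × Ann (X.box.and X.box) => (p.1.2, (p.2.1.2, p.2.2.2)))
        fun p => p.1.1)
      (hd (fun p : Ann (X.and X).box × Ann (X.box.and X.box) => (p.1.2, (p.2.1.2, p.2.2.2)))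
        fun p => p.1.1)⟩

theorem LL.dup_dia : L (X.and X).dia (X.dia.and X.dia) := by
  obtain ⟨c, hc⟩ := (Imp.fst (hT := hT) (h4 := h4)
    (F := fun p : Ann (X.and X) × Ann (X.and X) => real false X p.1.1 p.2.1)
    (G := fun p : Ann (X.and X) × Ann (X.and X) => real false X p.1.2 p.2.2)).dia
  obtain ⟨d, hd⟩ := (Imp.snd (hT := hT) (h4 := h4)
    (F := fun p : Ann (X.and X) × Ann (X.and X) => real false X p.1.1 p.2.1)
    (G := fun p : Ann (X.and X) × Ann (X.and X) => real false X p.1.2 p.2.2)).dia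
  exact ⟨fun u => ((.prop c u.1, u.2.1), (.prop d u.1, u.2.2)),
    fun u e => (u.1, (e.1.2, e.2.2)),
    Imp.andI
      (hc (fun p : Ann (X.and X).dia × Ann (X.dia.and X.dia) => (p.1.2, (p.2.1.2, p.2.2.2)))
        fun p => p.1.1)
      (hd (fun p : Ann (X.and X).dia × Ann (X.dia.and X.dia) => (p.1.2, (p.2.1.2, p.2.2.2)))
        fun p => p.1.1)⟩

theorem RR.dup_box : R (X.box.or X.box) (X.or X).box := by
  obtain ⟨c, hc⟩ := (Imp.inl (hT := hT) (h4 := h4)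
    (F := fun p : Ann (X.or X) × Ann (X.or X) => real true X p.1.1 p.2.1)
    (G := fun p : Ann (X.or X) × Ann (X.or X) => real true X p.1.2 p.2.2)).box
  obtain ⟨d, hd⟩ := (Imp.inr (hT := hT) (h4 := h4)
    (F := fun p : Ann (X.or X) × Ann (X.or X) => real true X p.1.1 p.2.1)
    (G := fun p : Ann (X.or X) × Ann (X.or X) => real true X p.1.2 p.2.2)).box
  exact ⟨fun u => ((u.1, u.2.1), (u.1, u.2.2)),
    fun u e => (.sum (.app c e.1.1) (.app d e.2.1), (e.1.2, e.2.2)),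
    Imp.orE
      ((hc (fun p : Ann (X.or X).box × Ann (X.box.or X.box) => (p.1.2, (p.2.1.2, p.2.2.2)))
        fun p => p.2.1.1).trans (Imp.ax fun _ => JAx.sum1))
      ((hd (fun p : Ann (X.or X).box × Ann (X.box.or X.box) => (p.1.2, (p.2.1.2, p.2.2.2)))
        fun p => p.2.2.1).trans (Imp.ax fun _ => JAx.sum2))⟩

theorem RR.dup_dia : R (X.dia.or X.dia) (X.or X).dia := by
  obtain ⟨c, hc⟩ := (Imp.inl (hT := hT) (h4 := h4)
    (F := fun p : Ann (X.or X) × Ann (X.or X) => real true X p.1.1 p.2.1)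
    (G := fun p : Ann (X.or X) × Ann (X.or X) => real true X p.1.2 p.2.2)).dia
  obtain ⟨d, hd⟩ := (Imp.inr (hT := hT) (h4 := h4)
    (F := fun p : Ann (X.or X) × Ann (X.or X) => real true X p.1.1 p.2.1)
    (G := fun p : Ann (X.or X) × Ann (X.or X) => real true X p.1.2 p.2.2)).dia
  exact ⟨fun u => ((u.1, u.2.1), (u.1, u.2.2)),
    fun u e => (.uni (.prop c e.1.1) (.prop d e.2.1), (e.1.2, e.2.2)),
    Imp.orE
      ((hc (fun p : Ann (X.or X).dia × Ann (X.dia.or X.dia) => (p.1.2, (p.2.1.2, p.2.2.2)))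
        fun p => p.2.1.1).trans (Imp.ax fun _ => JAx.uni1))
      ((hd (fun p : Ann (X.or X).dia × Ann (X.dia.or X.dia) => (p.1.2, (p.2.1.2, p.2.2.2)))
        fun p => p.2.2.1).trans (Imp.ax fun _ => JAx.uni2))⟩

/-- The merging lemma: contraction in negative and positive position. -/
theorem contraction (X : MForm) : L X (X.and X) ∧ R (X.or X) X := by
  induction X with
  | bot =>
    exact ⟨⟨fun _ => ((), ()), fun _ _ => (), Imp.andI Imp.refl Imp.refl⟩,
      ⟨fun _ => ((), ()), fun _ _ => (), Imp.orE Imp.refl Imp.refl⟩⟩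
  | atom n =>
    exact ⟨⟨fun _ => ((), ()), fun _ _ => (), Imp.andI Imp.refl Imp.refl⟩,
      ⟨fun _ => ((), ()), fun _ _ => (), Imp.orE Imp.refl Imp.refl⟩⟩
  | and A B ha hb =>
    exact ⟨(LL.and_map ha.1 hb.1).trans LL.dup_and, RR.dup_and.trans (RR.and_map ha.2 hb.2)⟩
  | or A B ha hb =>
    exact ⟨(LL.or_map ha.1 hb.1).trans LL.dup_or, RR.dup_or.trans (RR.or_map ha.2 hb.2)⟩
  | impl A B ha hb =>
    exact ⟨(LL.impl_map ha.2 hb.1).trans LL.dup_impl,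
      RR.dup_impl.trans (RR.impl_map ha.1 hb.2)⟩
  | box A ha => exact ⟨ha.1.box_map.trans LL.dup_box, RR.dup_box.trans ha.2.box_map⟩
  | dia A ha => exact ⟨ha.1.dia_map.trans LL.dup_dia, RR.dup_dia.trans ha.2.dia_map⟩

theorem LL.andI (h1 : L C X) (h2 : L C Y) : L C (X.and Y) :=
  (contraction C).1.trans (LL.and_map h1 h2)

theorem LL.dist : L (D.and (X.or Y)) ((D.and X).or (D.and Y)) := by
  have h : L ((D.and D).and (X.or Y)) ((D.and X).or (D.and Y)) :=
    ⟨fun u => ((u.1.1, u.2.1), (u.1.2, u.2.2)), fun _ e => ((e.1.1, e.2.1), (e.1.2, e.2.2)),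
      Imp.app (Imp.trans Imp.snd (Imp.orE
        (Imp.curry ((Imp.andI (Imp.snd.trans (Imp.fst.trans Imp.fst)) Imp.fst).trans Imp.inl))
        (Imp.curry ((Imp.andI (Imp.snd.trans (Imp.fst.trans Imp.snd)) Imp.fst).trans Imp.inr))))
        Imp.refl⟩
  exact (LL.and_map (contraction D).1 LL.refl).trans h

theorem LL.dia_or : L (X.or Y).dia (X.dia.or Y.dia) :=
  ⟨fun u => ((u.1, u.2.1), (u.1, u.2.2)), fun u e => (u.1, (e.1.2, e.2.2)),
    Imp.ax fun _ => JAx.jk3⟩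

theorem LL.dia_bot : L MForm.bot.dia .bot :=
  ⟨fun _ => (), fun u _ => u, Imp.ax fun _ => JAx.jk5⟩

theorem LL.box_dia : L (X.box.and D.dia) (D.and X).dia := by
  obtain ⟨c, hc⟩ := (Imp.curry (hT := hT) (h4 := h4) (Imp.andI Imp.snd Imp.fst :
    Imp hT h4 (fun p : (Ann X × Ann D) × (Ann X × Ann D) =>
      (real false X p.1.1 p.2.1).and (real false D p.1.2 p.2.2))
      (fun p => (real false D p.1.2 p.2.2).and (real false X p.1.1 p.2.1)))).box
  exact ⟨fun u => (.prop (.app c u.1.1) u.2.1, (u.2.2, u.1.2)),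
    fun u e => ((u.1.1, e.2.2), (u.2.1, e.2.1)),
    Imp.uncurry ((hc (fun p : Ann (X.box.and D.dia) × Ann (D.and X).dia =>
      ((p.1.1.2, p.1.2.2), (p.2.2.2, p.2.2.1))) (fun p => p.1.1.1)).trans
      (Imp.ax fun _ => JAx.jk2))⟩

theorem LL.t_box (ht : hT = true) : L X.box X := by
  subst ht
  exact ⟨fun u => u.2, fun u e => (u.1, e), Imp.ax fun _ => JAx.jtBox⟩

theorem LL.four_box (hf : h4 = true) : L X.box X.box.box := by
  subst hf
  exact ⟨fun u => (.bang u.1, u), fun _ e => e.2, Imp.ax fun _ => JAx.j4Box⟩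

/-! ### Positive facts -/

theorem RR.curry : R ((C.and N).impl P) (C.impl (N.impl P)) :=
  ⟨fun u => ((u.1, u.2.1), u.2.2), fun _ e => (e.1.1, (e.1.2, e.2)),
    Imp.curry (Imp.curry (Imp.app (Imp.fst.trans Imp.fst)
      (Imp.andI (Imp.fst.trans Imp.snd) Imp.snd)))⟩

theorem RR.uncurry : R (C.impl (N.impl P)) ((C.and N).impl P) :=
  ⟨fun u => (u.1.1, (u.1.2, u.2)), fun _ e => ((e.1, e.2.1), e.2.2),
    Imp.curry (Imp.app (Imp.app Imp.fst (Imp.snd.trans Imp.fst)) (Imp.snd.trans Imp.snd))⟩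

theorem RR.swap : R (C.impl (N.impl P)) (N.impl (C.impl P)) :=
  RR.uncurry.trans <| (RR.impl_map (LL.andI LL.snd LL.fst) RR.refl).trans RR.curry

theorem RR.cut (h : L D N) : R (D.impl (N.impl P)) (D.impl P) :=
  RR.uncurry.trans (RR.impl_map (LL.andI LL.refl h) RR.refl)

theorem RR.inl : R X (X.or Y) :=
  ⟨fun u => u.1, fun u e => (e, u.2), Imp.inl⟩
theorem RR.inr : R Y (X.or Y) :=
  ⟨fun u => u.2, fun u e => (u.1, e), Imp.inr⟩

/-- The axiom `jk4`. -/
theorem RR.k4 : R (N.dia.impl P.box) (N.impl P).box :=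
  ⟨fun u => ((.svar 0, u.2.1), (u.1, u.2.2)),
    fun u e => (.upd (.svar 0) e.2.1, (e.1.2, e.2.2)), Imp.ax fun _ => JAx.jk4⟩

theorem RR.k1 : R (X.impl Y).box (X.box.impl Y.box) :=
  ⟨fun u => (u.1.1, (u.1.2, u.2.2)),
    fun u e => ((u.1.1, e.2.1), (.app e.1 u.1.1, e.2.2)), Imp.ax fun _ => JAx.jk1⟩

theorem RR.k2 : R (X.impl Y).box (X.dia.impl Y.dia) :=
  ⟨fun u => (.pconst 0, (u.1.2, u.2.2)),
    fun u e => ((u.1.1, e.2.1), (.prop e.1 u.1.1, e.2.2)), Imp.ax fun _ => JAx.jk2⟩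

theorem RR.t_dia (ht : hT = true) : R X X.dia := by
  subst ht
  exact ⟨fun u => u.2, fun u e => (u.1, e), Imp.ax fun _ => JAx.jtDia⟩

theorem RR.four_dia (hf : h4 = true) : R X.dia.dia X.dia := by
  subst hf
  exact ⟨fun u => (u.1, u), fun _ e => e.2, Imp.ax fun _ => JAx.j4Dia⟩

/-- A convenient verum. -/
abbrev mtop : MForm := MForm.bot.impl MForm.bot

theorem RR.top : R (mtop.impl X) X :=
  ⟨fun u => (Ann.dflt _, u), fun _ e => e.2, Imp.app Imp.refl (UThm.const Imp.refl)⟩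

theorem RR.addChild : R ((D.and N).dia.impl ((D.and N).impl P).box) (D.impl (N.impl P)).box :=
  RR.k4.trans (RR.box_map ((RR.cut LL.refl).trans RR.curry))

theorem RR.topChild : R (mtop.dia.impl (mtop.impl X).box) X.box :=
  RR.k4.trans (RR.box_map (RR.top.trans RR.top))

theorem RR.boxL : R (D.impl (X.impl P)).box (X.box.impl (D.impl P).box) :=
  (RR.box_map RR.swap).trans RR.k1

/-! ### Two premise facts -/

theorem RR2.post (h : R2 Q P S) (h' : R S X) : R2 Q P X := by
  obtain ⟨f1, f2, g, h⟩ := h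
  obtain ⟨f', g', h'⟩ := h'
  exact ⟨fun u => f1 (f' u), fun u e => f2 (f' u) e, fun u e e' => g' u (g (f' u) e e'),
    (h.reindex fun p : Ann X × Ann Q × Ann P => (f' p.1, p.2)).trans
      (h'.reindex fun p : Ann X × Ann Q × Ann P => (p.1, g (f' p.1) p.2.1 p.2.2))⟩

theorem RR2.andI : R2 X Y (X.and Y) :=
  ⟨fun u => u.1, fun u _ => u.2, fun _ e e' => (e, e'), Imp.refl⟩

theorem RR2.orL : R2 (X.impl P) (Y.impl P) ((X.or Y).impl P) := by
  have h : R2 (X.impl P) (Y.impl P) ((X.or Y).impl (P.or P)) :=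
    ⟨fun u => (u.1.1, u.2.1), fun u _ => (u.1.2, u.2.2),
      fun _ e e' => ((e.1, e'.1), (e.2, e'.2)),
      Imp.curry (Imp.app (Imp.trans Imp.snd (Imp.orE
        (Imp.curry ((Imp.app (Imp.snd.trans (Imp.fst.trans Imp.fst)) Imp.fst).trans Imp.inl))
        (Imp.curry ((Imp.app (Imp.snd.trans (Imp.fst.trans Imp.snd)) Imp.fst).trans Imp.inr))))
        Imp.refl)⟩
  exact h.post (RR.impl_map LL.refl (contraction P).2)

theorem RR2.impl (h : R2 Q P S) : R2 (D.impl Q) (D.impl P) (D.impl S) := by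
  obtain ⟨f1, f2, g, h⟩ := h
  obtain ⟨f, k, hc⟩ := (contraction (hT := hT) (h4 := h4) D).1
  refine ⟨fun u => ((f u.1).1, f1 u.2), fun u e => ((f u.1).2, f2 u.2 e.2),
    fun u e e' => (k u.1 (e.1, e'.1), g u.2 e.2 e'.2), ?_⟩
  have hc := hc.reindex fun p : Ann (D.impl S) × Ann (D.impl Q) × Ann (D.impl P) =>
    (p.1.1, (p.2.1.1, p.2.2.1))
  have h := h.reindex fun p : Ann (D.impl S) × Ann (D.impl Q) × Ann (D.impl P) =>
    (p.1.2, (p.2.1.2, p.2.2.2))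
  exact Imp.curry (Imp.trans (Imp.andI
    (Imp.app (Imp.fst.trans Imp.fst) (Imp.snd.trans (hc.trans Imp.fst)))
    (Imp.app (Imp.fst.trans Imp.snd) (Imp.snd.trans (hc.trans Imp.snd)))) h)

theorem RR2.box (h : R2 Q P S) : R2 Q.box P.box S.box := by
  obtain ⟨f1, f2, g, h⟩ := h
  obtain ⟨c, hc⟩ := h.curry.box
  exact ⟨fun u => (u.1, f1 u.2), fun u e => (u.1, f2 u.2 e.2),
    fun u e e' => (.app (.app c e.1) e'.1, g u.2 e.2 e'.2),
    Imp.uncurry ((hc (fun p : Ann S.box × Ann Q.box × Ann P.box =>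
      (p.1.2, (p.2.1.2, p.2.2.2))) (fun p => p.2.1.1)).trans (Imp.ax fun _ => JAx.jk1))⟩

theorem MM.toRR2 (h : M Q E D) : R2 Q (D.impl P) (E.impl P) := by
  obtain ⟨f1, f2, g, h⟩ := h
  refine ⟨fun u => f1 u.1, fun u e => (f2 u.1 e, u.2), fun u e e' => (g u.1 e e'.1, e'.2), ?_⟩
  have h := h.reindex fun p : Ann (E.impl P) × Ann Q × Ann (D.impl P) => (p.1.1, (p.2.1, p.2.2.1))
  exact Imp.curry (Imp.app (Imp.fst.trans Imp.snd)
    ((Imp.andI (Imp.fst.trans Imp.fst) Imp.snd).trans h))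

theorem MM.base : M X (X.impl Y) Y :=
  ⟨fun u => u.1, fun u _ => u.2, fun _ e e' => (e, e'), Imp.app Imp.snd Imp.fst⟩

theorem MM.triv : M Q E E :=
  ⟨fun _ => Ann.dflt _, fun u _ => u, fun _ _ e => e, Imp.snd⟩

theorem MM.step (h : M Q E N) : M (D.impl Q).box (D.and E).dia (D.and N).dia := by
  obtain ⟨f1, f2, g, h⟩ := h
  obtain ⟨f, k, hd⟩ := (contraction (hT := hT) (h4 := h4) D).1
  have hd := hd.reindex fun p : (Ann D × Ann E) × (Ann D × Ann Q) × (Ann D × Ann N) =>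
    (p.1.1, (p.2.1.1, p.2.2.1))
  have h := h.reindex fun p : (Ann D × Ann E) × (Ann D × Ann Q) × (Ann D × Ann N) =>
    (p.1.2, (p.2.1.2, p.2.2.2))
  have h3 := Imp.curry (F := fun p : (Ann D × Ann E) × (Ann D × Ann Q) × (Ann D × Ann N) =>
      (real false D (f p.1.1).1 p.2.1.1).impl (real true Q (f1 p.1.2) p.2.1.2))
    (G := fun p => (real false D p.1.1 (k p.1.1 (p.2.1.1, p.2.2.1))).and
      (real false E p.1.2 (g p.1.2 p.2.1.2 p.2.2.2)))
    (Imp.andI (Imp.snd.trans (Imp.fst.trans (hd.trans Imp.snd)))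
      ((Imp.andI (Imp.app Imp.fst (Imp.snd.trans (Imp.fst.trans (hd.trans Imp.fst))))
        (Imp.snd.trans Imp.snd)).trans h))
  obtain ⟨c, hc⟩ := h3.box
  exact ⟨fun u => (.pconst 0, ((f u.2.1).1, f1 u.2.2)),
    fun u e => (.prop (.app c e.1) u.1, ((f u.2.1).2, f2 u.2.2 e.2.2)),
    fun u e e' => (u.1, (k u.2.1 (e.2.1, e'.2.1), g u.2.2 e.2.2 e'.2.2)),
    Imp.uncurry ((hc (fun p : Ann (D.and E).dia × Ann (D.impl Q).box × Ann (D.and N).dia =>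
      (p.1.2, (p.2.1.2, p.2.2.2))) (fun p => p.2.1.1)).trans (Imp.ax fun _ => JAx.jk2))⟩

end Orders

/-! ## Worlds, outputs and forcing -/

/-- Worlds: branches of left contexts, with the current node outermost. -/
inductive Wld : Type
  | root : MForm → Wld
  | child : MForm → Wld → Wld

def Wld.hd : Wld → MForm
  | .root C => C
  | .child D _ => D

/-- Add an input formula at the current node. -/
def Wld.add : Wld → MForm → Wld
  | .root C, N => .root (C.and N)
  | .child D w, N => .child (D.and N) (w.add (D.and N).dia)

/-- Realisability of a modal formula. -/
def Rlz (hT h4 : Bool) (X : MForm) : Prop :=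
  ∀ u : Ann X, ∃ e : Ann X, JThm hT h4 (real true X u e)

/-- Derivability of an output formula at the current node. -/
def Foc (hT h4 : Bool) : Wld → MForm → Prop
  | .root C, P => Rlz hT h4 (C.impl P)
  | .child D w, P => Foc hT h4 w (D.impl P).box

/-- Derivability of an output formula at the `k`-th ancestor. -/
def Osat (hT h4 : Bool) : Nat → MForm → Wld → Prop
  | 0, P, w => Foc hT h4 w P
  | _ + 1, _, .root _ => True
  | k + 1, P, .child _ w => Osat hT h4 k P w

/-- Coherent worlds. -/
def Ok (hT h4 : Bool) : Wld → Prop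
  | .root _ => True
  | .child D w => LL hT h4 w.hd D.dia ∧ Ok hT h4 w

/-- The second world is at least as strong as the first. -/
def Wle (hT h4 : Bool) : Wld → Wld → Prop
  | .root C, .root C' => LL hT h4 C' C
  | .child D w, .child D' w' => LL hT h4 D' D ∧ Wle hT h4 w w'
  | _, _ => False

/-- Accessibility. -/
inductive Rel (hT h4 : Bool) : Wld → Wld → Prop
  | base {D : MForm} {w : Wld} : Rel hT h4 w (.child D w)
  | refl {w : Wld} : hT = true → Rel hT h4 w w
  | trans {w v z : Wld} : h4 = true → Rel hT h4 w v → Rel hT h4 v z → Rel hT h4 w z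

/-- Closure of a set of worlds. -/
def Cl (hT h4 : Bool) (S : Wld → Prop) (w : Wld) : Prop :=
  ∀ w', Wle hT h4 w w' → Ok hT h4 w' → ∀ k P,
    (∀ w'', Wle hT h4 w' w'' → Ok hT h4 w'' → S w'' → Osat hT h4 k P w'') → Osat hT h4 k P w'

/-- Box of a set of worlds. -/
def BoxS (hT h4 : Bool) (S : Wld → Prop) (w : Wld) : Prop :=
  ∀ w', Wle hT h4 w w' → Ok hT h4 w' → ∀ v, Ok hT h4 v → Rel hT h4 w' v → S v

/-- Forcing. -/
def Val (hT h4 : Bool) : MForm → Wld → Prop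
  | .bot => Cl hT h4 fun _ => False
  | .atom n => fun w => Foc hT h4 w (.atom n)
  | .and A B => fun w => Val hT h4 A w ∧ Val hT h4 B w
  | .or A B => Cl hT h4 fun w => Val hT h4 A w ∨ Val hT h4 B w
  | .impl A B => fun w => ∀ w', Wle hT h4 w w' → Ok hT h4 w' → Val hT h4 A w' → Val hT h4 B w'
  | .box A => BoxS hT h4 (Val hT h4 A)
  | .dia A => Cl hT h4 fun w => ∃ v, Ok hT h4 v ∧ Rel hT h4 w v ∧ Val hT h4 A v

section Worlds

variable {hT h4 : Bool}
local notation "L" => LL hT h4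
local notation "R" => RR hT h4
local notation "R2" => RR2 hT h4
local notation "M" => MM hT h4

variable {X Y Z P Q S N C D E : MForm} {w v w' v' : Wld}

theorem Rlz.mono (h : Rlz hT h4 X) (hr : R X Y) : Rlz hT h4 Y := by
  obtain ⟨f, g, hr⟩ := hr
  intro u
  obtain ⟨e, he⟩ := h (f u)
  exact ⟨g u e, JThm.mp (UThm.toJ hr (u, e)) he⟩

theorem JThm.andIntro {A B : JForm} (h1 : JThm hT h4 A) (h2 : JThm hT h4 B) :
    JThm hT h4 (A.and B) := JThm.mp (JThm.mp (JThm.can [] JAx.andI) h1) h2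

theorem Rlz.comb (h1 : Rlz hT h4 Q) (h2 : Rlz hT h4 P) (hr : R2 Q P S) : Rlz hT h4 S := by
  obtain ⟨f1, f2, g, hr⟩ := hr
  intro u
  obtain ⟨e, he⟩ := h1 (f1 u)
  obtain ⟨e', he'⟩ := h2 (f2 u e)
  exact ⟨g u e e', JThm.mp (UThm.toJ hr (u, e, e')) (JThm.andIntro he he')⟩

theorem Rlz.impl (h : Rlz hT h4 P) : Rlz hT h4 (C.impl P) := by
  intro u
  obtain ⟨e, he⟩ := h u.2
  exact ⟨(u.1, e), JThm.mp (JThm.can [] JAx.ax1) he⟩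

theorem Rlz.box (h : Rlz hT h4 P) : Rlz hT h4 P.box := by
  intro u
  obtain ⟨e, he⟩ := h u.2
  obtain ⟨c, hc⟩ := (UThm.ofJ he).lift
  exact ⟨(c, e), hc.toJ ()⟩

theorem Foc.mono (h : Foc hT h4 w P) (hr : R P Q) : Foc hT h4 w Q := by
  induction w generalizing P Q with
  | root C => exact Rlz.mono h (RR.impl_map LL.refl hr)
  | child D w ih => exact ih h (RR.impl_map LL.refl hr).box_map

theorem Foc.comb (h1 : Foc hT h4 w Q) (h2 : Foc hT h4 w P) (hr : R2 Q P S) :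
    Foc hT h4 w S := by
  induction w generalizing P Q S with
  | root C => exact Rlz.comb h1 h2 hr.impl
  | child D w ih => exact ih h1 h2 hr.impl.box

theorem Foc.ofRlz (h : Rlz hT h4 P) : Foc hT h4 w P := by
  induction w generalizing P with
  | root C => exact h.impl
  | child D w ih => exact ih h.impl.box

theorem Foc.cut (h : Foc hT h4 w (N.impl P)) (hl : L w.hd N) : Foc hT h4 w P := by
  cases w with
  | root C => exact Rlz.mono h (RR.cut hl)
  | child D w => exact Foc.mono (w := w) h (RR.cut hl).box_map

theorem Foc.ofAdd (h : Foc hT h4 (w.add N) P) : Foc hT h4 w (N.impl P) := by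
  induction w generalizing N P with
  | root C => exact Rlz.mono h RR.curry
  | child D w ih => exact Foc.mono (w := w) (ih h) RR.addChild

theorem Wle.refl : Wle hT h4 w w := by
  induction w with
  | root C => exact LL.refl
  | child D w ih => exact ⟨LL.refl, ih⟩

theorem Wle.trans {w1 w2 w3 : Wld} (h1 : Wle hT h4 w1 w2) (h2 : Wle hT h4 w2 w3) :
    Wle hT h4 w1 w3 := by
  induction w1 generalizing w2 w3 with
  | root C =>
    cases w2 with
    | root C2 =>
      cases w3 with
      | root C3 => exact LL.trans h2 h1
      | child _ _ => exact h2.elim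
    | child _ _ => exact h1.elim
  | child D w ih =>
    cases w2 with
    | root C2 => exact h1.elim
    | child D2 w2 =>
      cases w3 with
      | root C3 => exact h2.elim
      | child _ _ => exact ⟨LL.trans h2.1 h1.1, ih h1.2 h2.2⟩

theorem Wle.hd (h : Wle hT h4 w w') : L w'.hd w.hd := by
  cases w <;> cases w'
  · exact h
  · exact h.elim
  · exact h.elim
  · exact h.1

theorem Wle.childInv (h : Wle hT h4 (.child D w) v) :
    ∃ D' w', v = .child D' w' ∧ L D' D ∧ Wle hT h4 w w' := by
  cases v with
  | root _ => exact h.elim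
  | child D' w' => exact ⟨D', w', rfl, h.1, h.2⟩

theorem Wle.add : Wle hT h4 w (w.add N) := by
  induction w generalizing N with
  | root C => exact LL.fst
  | child D w ih => exact ⟨LL.fst, ih⟩

theorem hd_add : L (w.add N).hd N := by
  cases w with
  | root C => exact LL.snd
  | child D w => exact LL.snd

theorem Ok.add : Ok hT h4 (w.add N) := by
  induction w generalizing N with
  | root C => trivial
  | child D w ih => exact ⟨hd_add, ih⟩

theorem Foc.up (h : Foc hT h4 w P) (hw : Wle hT h4 w w') : Foc hT h4 w' P := by
  induction w generalizing w' P with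
  | root C =>
    cases w' with
    | root C' => exact Rlz.mono h (RR.impl_map hw RR.refl)
    | child _ _ => exact hw.elim
  | child D w ih =>
    obtain ⟨D', w', rfl, hd, hw⟩ := hw.childInv
    exact Foc.mono (w := w') (ih h hw) (RR.impl_map hd RR.refl).box_map

theorem Osat.up {k : Nat} (h : Osat hT h4 k P w) (hw : Wle hT h4 w w') : Osat hT h4 k P w' := by
  induction k generalizing w w' with
  | zero => exact Foc.up h hw
  | succ k ih =>
    cases w with
    | root C =>
      cases w' with
      | root C' => trivial
      | child _ _ => exact hw.elim
    | child D w =>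
      obtain ⟨D', w', rfl, hd, hw⟩ := hw.childInv
      exact ih (w := w) (w' := w') h hw

/-! ### Left rules -/

theorem Osat.orL {k : Nat} (ho : Ok hT h4 w) (hl : L w.hd (X.or Y))
    (h1 : Osat hT h4 k P (w.add X)) (h2 : Osat hT h4 k P (w.add Y)) : Osat hT h4 k P w := by
  induction k generalizing w X Y with
  | zero => exact Foc.cut (Foc.comb (Foc.ofAdd h1) (Foc.ofAdd h2) RR2.orL) hl
  | succ k ih =>
    cases w with
    | root C => trivial
    | child D w =>
      exact ih (w := w) ho.2
        (ho.1.trans ((LL.dia_map ((LL.andI LL.refl hl).trans LL.dist)).trans LL.dia_or)) h1 h2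

theorem Osat.botL {k : Nat} (ho : Ok hT h4 w) (hl : L w.hd .bot) : Osat hT h4 k P w := by
  induction k generalizing w with
  | zero =>
    refine Foc.cut (Foc.ofRlz ?_) hl
    exact fun u => ⟨u, JThm.can [] JAx.exf⟩
  | succ k ih =>
    cases w with
    | root C => trivial
    | child D w => exact ih (w := w) ho.2 (ho.1.trans ((LL.dia_map hl).trans LL.dia_bot))

theorem Osat.mixL {k : Nat} (ho : Ok hT h4 w) (hm : M Q E N) (hl : L w.hd E)
    (h1 : Foc hT h4 w Q) (h2 : Osat hT h4 k P (w.add N)) : Osat hT h4 k P w := by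
  induction k generalizing w Q E N with
  | zero => exact Foc.cut (Foc.comb h1 (Foc.ofAdd h2) hm.toRR2) hl
  | succ k ih =>
    cases w with
    | root C => trivial
    | child D w =>
      exact ih (w := w) ho.2 (hm.step (D := D)) (ho.1.trans (LL.dia_map (LL.andI LL.refl hl))) h1 h2

theorem Rlz.self {n : Nat} : Rlz hT h4 ((MForm.atom n).impl (.atom n)) := fun u =>
  ⟨u, UThm.toJ (F := fun _ : Unit => (JForm.atom n).impl (.atom n)) Imp.refl ()⟩

theorem Rlz.top : Rlz hT h4 mtop := fun u =>
  ⟨u, UThm.toJ (F := fun _ : Unit => JForm.bot.impl .bot) Imp.refl ()⟩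

theorem Osat.cut {k : Nat} (ho : Ok hT h4 w) (hl : L w.hd N)
    (h2 : Osat hT h4 k P (w.add N)) : Osat hT h4 k P w :=
  Osat.mixL ho (Q := mtop) MM.triv hl (Foc.ofRlz Rlz.top) h2

theorem Osat.boxL {k : Nat} (ho : Ok hT h4 (.child D w)) (hl : L w.hd X.box)
    (h : Osat hT h4 k P ((Wld.child D w).add X)) : Osat hT h4 k P (.child D w) := by
  cases k with
  | zero =>
    have h := Foc.ofAdd h
    exact Foc.cut (w := w) (Foc.mono (w := w) h RR.boxL) hl
  | succ k =>
    exact Osat.cut (w := w) (k := k) ho.2 ((LL.andI hl ho.1).trans LL.box_dia) h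

/-! ### Accessibility -/

theorem Rel.ok (h : Rel hT h4 w v) (ho : Ok hT h4 v) : Ok hT h4 w := by
  induction h with
  | base => exact ho.2
  | refl _ => exact ho
  | trans _ _ _ ih1 ih2 => exact ih1 (ih2 ho)

theorem Rel.back (h : Rel hT h4 w v) (hv : Wle hT h4 v v') :
    ∃ w', Wle hT h4 w w' ∧ Rel hT h4 w' v' := by
  induction h generalizing v' with
  | base =>
    obtain ⟨D', w', rfl, _, hw⟩ := hv.childInv
    exact ⟨w', hw, .base⟩
  | refl ht => exact ⟨v', hv, .refl ht⟩
  | trans hf _ _ ih1 ih2 =>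
    obtain ⟨v1, h1, r1⟩ := ih2 hv
    obtain ⟨w1, h2, r2⟩ := ih1 h1
    exact ⟨w1, h2, .trans hf r2 r1⟩

theorem Rel.outDown (h : Rel hT h4 w v) (ho : Ok hT h4 v) (k : Nat) (P : MForm) :
    ∃ k' P', (Osat hT h4 k' P' w → Osat hT h4 k P v) ∧
      ∀ w2, Wle hT h4 w w2 → Ok hT h4 w2 → ∃ v2, Wle hT h4 v v2 ∧ Ok hT h4 v2 ∧
        Rel hT h4 w2 v2 ∧ (Osat hT h4 k P v2 → Osat hT h4 k' P' w2) := by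
  induction h generalizing k P with
  | @base D w =>
    cases k with
    | zero =>
      exact ⟨0, (D.impl P).box, fun h => h, fun w2 hw o2 =>
        ⟨.child D w2, ⟨LL.refl, hw⟩, ⟨hw.hd.trans ho.1, o2⟩, .base, fun h => h⟩⟩
    | succ k =>
      exact ⟨k, P, fun h => h, fun w2 hw o2 =>
        ⟨.child D w2, ⟨LL.refl, hw⟩, ⟨hw.hd.trans ho.1, o2⟩, .base, fun h => h⟩⟩
  | refl ht => exact ⟨k, P, fun h => h, fun w2 hw o2 => ⟨w2, hw, o2, .refl ht, fun h => h⟩⟩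
  | trans hf r1 r2 ih1 ih2 =>
    obtain ⟨k1, P1, a1, b1⟩ := ih2 ho k P
    obtain ⟨k2, P2, a2, b2⟩ := ih1 (r2.ok ho) k1 P1
    refine ⟨k2, P2, fun h => a1 (a2 h), fun w2 hw o2 => ?_⟩
    obtain ⟨v2, hv, ov, rv, c2⟩ := b2 w2 hw o2
    obtain ⟨z2, hz, oz, rz, c1⟩ := b1 v2 hv ov
    exact ⟨z2, hz, oz, .trans hf rv rz, fun h => c2 (c1 h)⟩

theorem Rel.outUp (h : Rel hT h4 w v) (k : Nat) (P : MForm) :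
    ∃ k', (Osat hT h4 k' P v → Osat hT h4 k P w) ∧
      ∀ v2, Wle hT h4 v v2 → ∃ w2, Wle hT h4 w w2 ∧
        Rel hT h4 w2 v2 ∧ (Osat hT h4 k P w2 → Osat hT h4 k' P v2) := by
  induction h generalizing k with
  | @base D w =>
    refine ⟨k + 1, fun h => h, fun v2 hv => ?_⟩
    obtain ⟨D', w', rfl, _, hw⟩ := hv.childInv
    exact ⟨w', hw, .base, fun h => h⟩
  | refl ht => exact ⟨k, fun h => h, fun v2 hv => ⟨v2, hv, .refl ht, fun h => h⟩⟩
  | trans hf r1 r2 ih1 ih2 =>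
    obtain ⟨k1, a1, b1⟩ := ih1 k
    obtain ⟨k2, a2, b2⟩ := ih2 k1
    refine ⟨k2, fun h => a1 (a2 h), fun z2 hz => ?_⟩
    obtain ⟨v2, hv, rv, c2⟩ := b2 z2 hz
    obtain ⟨w2, hw, rw', c1⟩ := b1 v2 hv
    exact ⟨w2, hw, .trans hf rw' rv, fun h => c2 (c1 h)⟩

/-! ### Closure -/

variable {A B : Wld → Prop}

theorem Cl.up (h : Cl hT h4 A w) (hw : Wle hT h4 w w') : Cl hT h4 A w' :=
  fun w2 h2 o2 k P hk => h w2 (hw.trans h2) o2 k P hk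

theorem Cl.bind (h : Cl hT h4 A w) (hab : ∀ w', Wle hT h4 w w' → Ok hT h4 w' → A w' →
    Cl hT h4 B w') : Cl hT h4 B w := by
  intro w2 h2 o2 k P hk
  refine h w2 h2 o2 k P fun w3 h3 o3 ha => ?_
  exact hab w3 (h2.trans h3) o3 ha w3 Wle.refl o3 k P fun w4 h4' o4 hb => hk w4 (h3.trans h4') o4 hb

theorem Cl.unit (hup : ∀ w w', Wle hT h4 w w' → A w → A w') (h : A w) : Cl hT h4 A w :=
  fun w2 h2 o2 _ _ hk => hk w2 Wle.refl o2 (hup _ _ h2 h)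

theorem BoxS.up (h : BoxS hT h4 A w) (hw : Wle hT h4 w w') : BoxS hT h4 A w' :=
  fun w2 h2 o2 v ov rv => h w2 (hw.trans h2) o2 v ov rv

theorem BoxS.closed (hA : ∀ v, Ok hT h4 v → Cl hT h4 A v → A v)
    (h : Cl hT h4 (BoxS hT h4 A) w) : BoxS hT h4 A w := by
  intro w1 h1 o1 v ov rv
  refine hA v ov fun v' hv ov' k P hk => ?_
  obtain ⟨w2, h2, r2⟩ := rv.back hv
  obtain ⟨k', P', a, b⟩ := r2.outDown ov' k P
  refine a (h w2 (h1.trans h2) (r2.ok ov') k' P' fun w3 h3 o3 hb => ?_)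
  obtain ⟨v3, hv3, ov3, r3, c⟩ := b w3 h3 o3
  exact c (hk v3 hv3 ov3 (hb w3 Wle.refl o3 v3 ov3 r3))

theorem Cl.closed (h : Cl hT h4 (Cl hT h4 A) w) : Cl hT h4 A w :=
  h.bind fun _ _ _ h => h

theorem DiaS.lift (h : Cl hT h4 (fun w => ∃ v, Ok hT h4 v ∧ Rel hT h4 w v ∧ Cl hT h4 A v) w) :
    Cl hT h4 (fun w => ∃ v, Ok hT h4 v ∧ Rel hT h4 w v ∧ A v) w := by
  intro w1 h1 o1 k P hk
  refine h w1 h1 o1 k P ?_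
  rintro w2 h2 o2 ⟨v, ov, rv, hv⟩
  obtain ⟨k', a, b⟩ := rv.outUp k P
  refine a (hv v Wle.refl ov k' P fun v2 hv2 ov2 ha => ?_)
  obtain ⟨w3, h3, r3, c⟩ := b v2 hv2
  exact c (hk w3 (h2.trans h3) (r3.ok ov2) ⟨v2, ov2, r3, ha⟩)

theorem Val.up (h : Val hT h4 X w) (hw : Wle hT h4 w w') : Val hT h4 X w' := by
  induction X generalizing w w' with
  | bot => exact Cl.up h hw
  | atom n => exact Foc.up h hw
  | and A B ha hb => exact ⟨ha h.1 hw, hb h.2 hw⟩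
  | or A B ha hb => exact Cl.up h hw
  | impl A B ha hb => exact fun w2 h2 o2 hv => h w2 (hw.trans h2) o2 hv
  | box A ha => exact BoxS.up h hw
  | dia A ha => exact Cl.up h hw

theorem Cl.map (h : Cl hT h4 A w) (hab : ∀ w', Wle hT h4 w w' → Ok hT h4 w' → A w' → B w') :
    Cl hT h4 B w := fun w2 h2 o2 k P hk =>
  h w2 h2 o2 k P fun w3 h3 o3 ha => hk w3 h3 o3 (hab w3 (h2.trans h3) o3 ha)

theorem Val.closed (ho : Ok hT h4 w) (h : Cl hT h4 (Val hT h4 X) w) : Val hT h4 X w := by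
  induction X generalizing w with
  | bot => exact Cl.closed h
  | atom n => exact h w Wle.refl ho 0 (.atom n) fun _ _ _ h => h
  | and A B ha hb =>
    exact ⟨ha ho (h.map fun _ _ _ h => h.1), hb ho (h.map fun _ _ _ h => h.2)⟩
  | or A B ha hb => exact Cl.closed h
  | impl A B ha hb =>
    exact fun w2 h2 o2 hv => hb o2 ((h.up h2).map fun w3 h3 o3 hi =>
      hi w3 Wle.refl o3 (hv.up h3))
  | box A ha => exact BoxS.closed (fun v ov hv => ha ov hv) h
  | dia A ha => exact Cl.closed h

/-! ### Soundness -/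

theorem Val.ax (h : MAx hT h4 X) (ho : Ok hT h4 w) : Val hT h4 X w := by
  cases h with
  | ax1 => exact fun w1 h1 o1 a w2 h2 o2 _ => a.up h2
  | ax2 =>
    exact fun w1 h1 o1 a w2 h2 o2 b w3 h3 o3 c =>
      a w3 (h2.trans h3) o3 c w3 Wle.refl o3 (b w3 h3 o3 c)
  | andI => exact fun w1 h1 o1 a w2 h2 o2 b => ⟨a.up h2, b⟩
  | andE1 => exact fun w1 h1 o1 a => a.1
  | andE2 => exact fun w1 h1 o1 a => a.2
  | orI1 =>
    exact fun w1 h1 o1 a => Cl.unit (fun _ _ hw h => h.imp (·.up hw) (·.up hw)) (Or.inl a)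
  | orI2 =>
    exact fun w1 h1 o1 a => Cl.unit (fun _ _ hw h => h.imp (·.up hw) (·.up hw)) (Or.inr a)
  | orE =>
    exact fun w1 h1 o1 a w2 h2 o2 b w3 h3 o3 c => Val.closed o3 (Cl.map c fun w4 h4' o4 d =>
      d.elim (fun d => a w4 (h2.trans (h3.trans h4')) o4 d) (fun d => b w4 (h3.trans h4') o4 d))
  | exf => exact fun w1 h1 o1 a => Val.closed o1 (Cl.map a fun _ _ _ h => h.elim)
  | k1 =>
    exact fun w1 h1 o1 a w2 h2 o2 b w3 h3 o3 v ov rv =>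
      a w3 (h2.trans h3) o3 v ov rv v Wle.refl ov (b w3 h3 o3 v ov rv)
  | k2 =>
    exact fun w1 h1 o1 a w2 h2 o2 b => Cl.map b fun w3 h3 o3 ⟨v, ov, rv, hv⟩ =>
      ⟨v, ov, rv, a w3 (h2.trans h3) o3 v ov rv v Wle.refl ov hv⟩
  | k3 =>
    intro w1 h1 o1 a w2 h2 o2 k P hk
    refine DiaS.lift a w2 h2 o2 k P ?_
    rintro w3 h3 o3 ⟨v, ov, rv, hv⟩
    have key : ∀ Z : MForm, Val hT h4 Z v → Val hT h4 Z.dia w3 := by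
      intro Z hz w4 h4' o4 k' P' hk'
      obtain ⟨v4, hv4, ov4, r4, _⟩ := (rv.outDown ov 0 Z).choose_spec.choose_spec.2 w4 h4' o4
      exact hk' w4 Wle.refl o4 ⟨v4, ov4, r4, hz.up hv4⟩
    exact hk w3 h3 o3 (hv.imp (key _) (key _))
  | @k4 _ _ A B =>
    intro w1 h1 o1 a w2 h2 o2 v ov rv v' hv ov' ha
    obtain ⟨w3, h3, r3⟩ := rv.back hv
    refine a w3 (h2.trans h3) (r3.ok ov') ?_ w3 Wle.refl (r3.ok ov') v' ov' r3
    intro w4 h4' o4 k' P' hk'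
    obtain ⟨v4, hv4, ov4, r4, _⟩ := (r3.outDown ov' 0 A).choose_spec.choose_spec.2 w4 h4' o4
    exact hk' w4 Wle.refl o4 ⟨v4, ov4, r4, ha.up hv4⟩
  | k5 =>
    exact fun w1 h1 o1 a => (DiaS.lift a).map fun _ _ _ ⟨_, _, _, h⟩ => h
  | tBox => exact fun w1 h1 o1 a => a w1 Wle.refl o1 w1 o1 (.refl rfl)
  | tDia =>
    exact fun w1 h1 o1 a w2 h2 o2 k P hk =>
      hk w2 Wle.refl o2 ⟨w2, o2, .refl rfl, a.up h2⟩
  | fourBox =>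
    intro w1 h1 o1 a w2 h2 o2 v ov rv v' hv ov' z oz rz
    obtain ⟨w3, h3, r3⟩ := rv.back hv
    exact a w3 (h2.trans h3) (r3.ok ov') z oz (.trans rfl r3 rz)
  | fourDia =>
    exact fun w1 h1 o1 a => (DiaS.lift a).map fun _ _ _ ⟨_, _, rv, z, oz, rz, hz⟩ =>
      ⟨z, oz, .trans rfl rv rz, hz⟩

theorem Val.sound (h : MThm hT h4 X) (ho : Ok hT h4 w) : Val hT h4 X w := by
  induction h generalizing w with
  | ax h => exact Val.ax h ho
  | mp _ _ h1 h2 => exact h1 ho w Wle.refl ho (h2 ho)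
  | nec _ ih => exact fun _ _ _ v ov _ => ih ov

/-! ### Reflection and reification -/

theorem Rel.boxL (h : Rel hT h4 w v) (ho : Ok hT h4 v)
    (hl : Cl hT h4 (fun w => L w.hd X.box) w) :
    Cl hT h4 (fun v => L v.hd X) v ∧ (h4 = true → Cl hT h4 (fun v => L v.hd X.box) v) := by
  induction h generalizing X with
  | @base D w =>
    have key : ∀ {Z : MForm}, Cl hT h4 (fun w => L w.hd Z.box) w →
        Cl hT h4 (fun v => L v.hd Z) (.child D w) := by
      intro Z hz v' hv ov k P hk
      obtain ⟨D', w', rfl, _, hw⟩ := hv.childInv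
      have step : ∀ w3, Wle hT h4 w' w3 → Ok hT h4 w3 → L w3.hd Z.box →
          Osat hT h4 k P (.child D' w3) := fun w3 h3 o3 hb =>
        Osat.boxL ⟨h3.hd.trans ov.1, o3⟩ hb
          (hk _ (Wle.trans (w2 := .child D' w3) ⟨LL.refl, h3⟩ Wle.add) Ok.add hd_add)
      cases k with
      | zero => exact hz w' hw ov.2 0 (D'.impl P).box step
      | succ k => exact hz w' hw ov.2 k P step
    exact ⟨key hl, fun hf => key (hl.map fun _ _ _ h => h.trans (LL.four_box hf))⟩
  | refl ht => exact ⟨hl.map fun _ _ _ h => h.trans (LL.t_box ht), fun _ => hl⟩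
  | trans hf r1 r2 ih1 ih2 => exact ih2 ho ((ih1 (r2.ok ho) hl).2 hf)

theorem Rel.foc (h : Rel hT h4 w v) (ho : Ok hT h4 v) (hf : Foc hT h4 v X) :
    Foc hT h4 w X.dia := by
  induction h generalizing X with
  | base => exact Foc.cut (Foc.mono hf RR.k2) ho.1
  | refl ht => exact Foc.mono hf (RR.t_dia ht)
  | trans h _ r2 ih1 ih2 => exact Foc.mono (ih1 (r2.ok ho) (ih2 ho hf)) (RR.four_dia h)

theorem reflect_reify (X : MForm) :
    (∀ w, Ok hT h4 w → L w.hd X → Val hT h4 X w) ∧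
    (∀ w, Ok hT h4 w → Val hT h4 X w → Foc hT h4 w X) := by
  induction X with
  | bot =>
    exact ⟨fun w ho hl w1 h1 o1 k P _ => Osat.botL o1 (h1.hd.trans hl),
      fun w ho h => h w Wle.refl ho 0 .bot fun _ _ _ h => h.elim⟩
  | atom n => exact ⟨fun w ho hl => Foc.cut (Foc.ofRlz Rlz.self) hl, fun w ho h => h⟩
  | and A B ha hb =>
    exact ⟨fun w ho hl => ⟨ha.1 w ho (hl.trans LL.fst), hb.1 w ho (hl.trans LL.snd)⟩,
      fun w ho h => Foc.comb (ha.2 w ho h.1) (hb.2 w ho h.2) RR2.andI⟩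
  | or A B ha hb =>
    refine ⟨fun w ho hl w1 h1 o1 k P hk => Osat.orL o1 (h1.hd.trans hl)
      (hk _ Wle.add Ok.add (Or.inl (ha.1 _ Ok.add hd_add)))
      (hk _ Wle.add Ok.add (Or.inr (hb.1 _ Ok.add hd_add))),
      fun w ho h => h w Wle.refl ho 0 (A.or B) fun w1 _ o1 h => ?_⟩
    exact h.elim (fun h => Foc.mono (ha.2 _ o1 h) RR.inl) (fun h => Foc.mono (hb.2 _ o1 h) RR.inr)
  | impl A B ha hb =>
    refine ⟨fun w ho hl w1 h1 o1 hv => Val.closed o1 fun w2 h2 o2 k P hk => ?_,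
      fun w ho h => Foc.ofAdd (hb.2 _ Ok.add (h _ Wle.add Ok.add (ha.1 _ Ok.add hd_add)))⟩
    exact Osat.mixL o2 MM.base ((h1.trans h2).hd.trans hl) (ha.2 w2 o2 (hv.up h2))
      (hk _ Wle.add Ok.add (hb.1 _ Ok.add hd_add))
  | box A ha =>
    refine ⟨fun w ho hl w1 h1 o1 v ov rv => Val.closed ov ?_, fun w ho h => ?_⟩
    · exact (rv.boxL ov (Cl.unit (fun _ _ hw h => hw.hd.trans h) (h1.hd.trans hl))).1.map fun v1 _ o1 hv => ha.1 v1 o1 hv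
    · have hv := ha.2 (.child mtop (w.add mtop.dia)) ⟨hd_add, Ok.add⟩
        (h _ Wle.add Ok.add _ ⟨hd_add, Ok.add⟩ .base)
      exact Foc.mono (Foc.ofAdd (w := w) hv) RR.topChild
  | dia A ha =>
    refine ⟨fun w ho hl w1 h1 o1 k P hk => hk w1 Wle.refl o1
      ⟨.child A w1, ⟨h1.hd.trans hl, o1⟩, .base, ha.1 _ ⟨h1.hd.trans hl, o1⟩ LL.refl⟩,
      fun w ho h => h w Wle.refl ho 0 A.dia fun w1 _ o1 ⟨v, ov, rv, hv⟩ => ?_⟩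
    exact rv.foc ov (ha.2 v ov hv)

theorem Rlz.complete (h : MThm hT h4 X) : Rlz hT h4 X :=
  Rlz.mono ((reflect_reify X).2 (.root mtop) trivial (Val.sound h trivial)) RR.top

end Worlds

/-- Realisation Theorem: if A is a theorem of L ∈ {IK, IKt, IK4, IS4}
then there is a realisation r (with (B^r)° = B for all B) such that A^r is a theorem
of the corresponding justification logic JL. -/
theorem realisation_theorem (hT h4 : Bool) (A : MForm) (h : MThm hT h4 A) :
    ∃ r : MForm → JForm, (∀ B : MForm, forget (r B) = B) ∧ JThm hT h4 (r A) := by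
  classical
  obtain ⟨e, he⟩ := Rlz.complete h (Ann.dflt A)
  refine ⟨fun B => if hB : B = A then real true A (Ann.dflt A) e
    else real true B (Ann.dflt B) (Ann.dflt B), fun B => ?_, ?_⟩
  · by_cases hB : B = A
    · subst hB; simp [forget_real]
    · simp [hB, forget_real]
  · simpa using he

end JIKPaper
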